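/- Let U, V be open neighborhoods of 0 in ℂ × ℂ, let φ = (φ₁, φ₂) : U → V be a biholomorphism with φ(0) = 0, let g be complex analytic on V, and set f := g ∘ φ. Let α : ℂ → ℂ be analytic near 0 with α(0) = 0, assume ψ(y) := φ₂(α(y), y) has vanishing order exactly 1 at 0, and let β(w) := φ₁(α(ψ⁻¹(w)), ψ⁻¹(w)), so that φ(α(y), y) = (β(ψ(y)), ψ(y)) near 0. For each natural number q ≥ 1 set Λ_f(q) := inf over u ∈ ℂ of min( ord₀(y ↦ f_x(α(y)+u y^q, y)), ord₀(y ↦ f_y(α(y)+u y^q, y)) ) and Λ_g(q) := inf over u ∈ ℂ of min( ord₀(w ↦ g_x(β(w)+u w^q, w)), ord₀(w ↦ g_y(β(w)+u w^q, w)) ). Then Λ_f(q) = Λ_g(q) for every natural number q ≥ 1. -/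

import Mathlib

open Filter

/-- The vanishing order at `0` of a function `u : ℂ → ℂ`: the least `n` such that the
`n`-th Taylor coefficient of `u` at `0` is nonzero, in `ℕ∞` (`⊤` if none is). -/
noncomputable def ord₀ (u : ℂ → ℂ) : ℕ∞ :=
  sInf ((fun n : ℕ => (n : ℕ∞)) '' {n : ℕ | iteratedDeriv n u 0 ≠ 0})

/-- `Λ_f(q)`: the infimum over `u ∈ ℂ` of the minimum of the vanishing orders at `0` of
`y ↦ f_x(α(y)+u y^q, y)` and `y ↦ f_y(α(y)+u y^q, y)`. -/
noncomputable def gradOrdPert (f : ℂ × ℂ → ℂ) (α : ℂ → ℂ) (q : ℕ) : ℕ∞ :=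
  ⨅ u : ℂ,
    min (ord₀ (fun y => fderiv ℂ f (α y + u * y ^ q, y) (1, 0)))
        (ord₀ (fun y => fderiv ℂ f (α y + u * y ^ q, y) (0, 1)))

section

open Asymptotics Metric
open scoped Topology

/-- The vanishing order is at least `n` iff the function is `O(y ^ n)`. -/
lemma natCast_le_ord₀_iff_isBigO {u : ℂ → ℂ} (hu : AnalyticAt ℂ u 0) (n : ℕ) :
    (n : ℕ∞) ≤ ord₀ u ↔ u =O[𝓝 0] (fun y => y ^ n) := by
  have h1 : (n : ℕ∞) ≤ ord₀ u ↔ (n : ℕ∞) ≤ analyticOrderAt u 0 := by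
    rw [natCast_le_analyticOrderAt_iff_iteratedDeriv_eq_zero hu]
    simp only [ord₀, le_sInf_iff, Set.forall_mem_image, Set.mem_ofPred_eq, Nat.cast_le]
    exact forall_congr' fun i => by rw [← not_imp_not, not_not, not_le]
  rw [h1]
  constructor
  · rw [natCast_le_analyticOrderAt hu]
    rintro ⟨v, hv, huv⟩
    have hO := (isBigO_refl (fun y : ℂ => y ^ n) (𝓝 0)).mul (hv.continuousAt.isBigO_one ℂ)
    simp only [mul_one] at hO
    exact (Filter.EventuallyEq.isBigO (huv.mono fun y hy => by simpa using hy)).trans hO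
  · intro hO
    by_contra! hlt
    obtain ⟨m, hm⟩ := ENat.ne_top_iff_exists.mp (ne_top_of_lt hlt)
    obtain ⟨v, hv, hv0, huv⟩ := (hu.analyticOrderAt_eq_natCast).mp hm.symm
    rw [← hm, Nat.cast_lt] at hlt
    have hv' : (fun y : ℂ => y ^ m) =O[𝓝 0] fun y => y ^ m * v y := by
      refine ((isBigO_refl (fun y : ℂ => y ^ m) (𝓝 0)).mul
        ((hv.continuousAt.inv₀ hv0).isBigO_one ℂ) |>.mul (isBigO_refl v _)).congr' ?_ ?_
      · filter_upwards [hv.continuousAt.eventually_ne hv0] with y hy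
        simp [hy]
      · exact .of_forall fun y => by simp
    have hpow : (fun y : ℂ => y ^ m) =O[𝓝 0] fun y => y ^ n :=
      hv'.trans ((Filter.EventuallyEq.isBigO (huv.mono fun y hy => by simpa using hy.symm)).trans hO)
    have := (hpow.trans_isLittleO (isLittleO_pow_pow hlt)).mono
      (nhdsWithin_le_nhds (s := ({0} : Set ℂ)ᶜ))
    refine isLittleO_irrefl ?_ this
    exact Eventually.frequently (eventually_mem_nhdsWithin.mono fun y hy => pow_ne_zero m hy)

/-- A functional on `ℂ × ℂ` is controlled by its values on the standard basis. -/
lemma norm_le_add_norm_apply (L : ℂ × ℂ →L[ℂ] ℂ) : ‖L‖ ≤ ‖L (1, 0)‖ + ‖L (0, 1)‖ := by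
  refine L.opNorm_le_bound (by positivity) fun p => ?_
  have h : L p = p.1 * L (1, 0) + p.2 * L (0, 1) := by
    rw [← smul_eq_mul, ← smul_eq_mul, ← map_smul, ← map_smul, ← map_add]
    simp
  calc ‖L p‖ ≤ ‖p.1‖ * ‖L (1, 0)‖ + ‖p.2‖ * ‖L (0, 1)‖ := by
        rw [h, ← norm_mul, ← norm_mul]; exact norm_add_le _ _
    _ ≤ ‖p‖ * ‖L (1, 0)‖ + ‖p‖ * ‖L (0, 1)‖ := by
        gcongr
        · exact norm_fst_le p
        · exact norm_snd_le p
    _ = _ := by ring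

lemma natCast_le_gradOrdPert_iff_isBigO {f : ℂ × ℂ → ℂ} (hf : AnalyticAt ℂ f 0) {α : ℂ → ℂ}
    (hα : AnalyticAt ℂ α 0) (hα0 : α 0 = 0) {q : ℕ} (hq : 1 ≤ q) (n : ℕ) :
    (n : ℕ∞) ≤ gradOrdPert f α q ↔
      ∀ u : ℂ, (fun y => fderiv ℂ f (α y + u * y ^ q, y)) =O[𝓝 0] (fun y => y ^ n) := by
  simp only [gradOrdPert, le_iInf_iff, le_min_iff]
  refine forall_congr' fun u => ?_
  have hcurve : AnalyticAt ℂ (fun y => (α y + u * y ^ q, y)) 0 := by fun_prop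
  have hcurve0 : (α 0 + u * 0 ^ q, (0 : ℂ)) = 0 := by
    simp [hα0, Nat.one_le_iff_ne_zero.mp hq]
  have hL : AnalyticAt ℂ (fun y => fderiv ℂ f (α y + u * y ^ q, y)) 0 :=
    AnalyticAt.fun_comp (by rw [hcurve0]; exact hf.fderiv) hcurve
  have happly (v : ℂ × ℂ) : AnalyticAt ℂ (fun y => fderiv ℂ f (α y + u * y ^ q, y) v) 0 :=
    ((ContinuousLinearMap.apply ℂ ℂ v).analyticAt _).fun_comp hL
  rw [natCast_le_ord₀_iff_isBigO (happly _), natCast_le_ord₀_iff_isBigO (happly _)]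
  constructor
  · rintro ⟨h1, h2⟩
    refine IsBigO.trans (.of_norm_le fun y => ?_) (h1.norm_left.add h2.norm_left)
    exact norm_le_add_norm_apply _
  · intro h
    exact ⟨((ContinuousLinearMap.apply ℂ ℂ _).isBigO_comp _ _).trans h,
      ((ContinuousLinearMap.apply ℂ ℂ _).isBigO_comp _ _).trans h⟩

/-- A property that holds near the origin of `ℂ × ℂ` holds along the curves `(α y + t y ^ q, y)`,
uniformly for bounded `t`. -/
lemma eventually_forall_perturbation {P : ℂ × ℂ → Prop} (hP : ∀ᶠ p in 𝓝 0, P p) {α : ℂ → ℂ}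
    (hα : ContinuousAt α 0) (hα0 : α 0 = 0) {q : ℕ} (hq : 1 ≤ q) (R : ℝ) :
    ∀ᶠ y in 𝓝 0, ∀ t : ℂ, ‖t‖ ≤ R → P (α y + t * y ^ q, y) := by
  obtain ⟨ε, hε, hball⟩ := Metric.eventually_nhds_iff_ball.mp hP
  have hsmall : ∀ᶠ y in 𝓝 (0 : ℂ), ‖α y‖ + |R| * ‖y‖ ^ q < ε := by
    refine ContinuousAt.eventually_lt (f := fun y : ℂ => ‖α y‖ + |R| * ‖y‖ ^ q)
      (hα.norm.add (by fun_prop)) continuousAt_const ?_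
    simpa [hα0, Nat.one_le_iff_ne_zero.mp hq] using hε
  filter_upwards [hsmall, ball_mem_nhds (0 : ℂ) hε] with y hy1 hy2 t ht
  refine hball _ ?_
  rw [mem_ball_zero_iff, Prod.norm_def, max_lt_iff]
  refine ⟨lt_of_le_of_lt ?_ hy1, by simpa using hy2⟩
  refine (norm_add_le _ _).trans ?_
  rw [norm_mul, norm_pow]
  gcongr
  exact ht.trans (le_abs_self R)

section

variable {F : Type*} [NormedAddCommGroup F] [NormedSpace ℂ F]

/-- The Schwarz lemma for functions that are `O(w ^ n)` at the center. -/
lemma norm_le_mul_div_pow_of_isBigO {h : ℂ → F} {r M : ℝ} {n : ℕ}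
    (hd : DifferentiableOn ℂ h (ball 0 r)) (hM : ∀ w ∈ ball 0 r, ‖h w‖ ≤ M)
    (hO : h =O[𝓝 0] (fun w => w ^ n)) {w : ℂ} (hw : w ∈ ball 0 r) :
    ‖h w‖ ≤ M * (‖w‖ / r) ^ n := by
  cases n with
  | zero => simpa using hM w hw
  | succ n =>
    have h0 : h 0 = 0 := by
      have hO' : h =O[𝓝 0] fun w => ‖w - 0‖ ^ (n + 1) := by simpa using hO.norm_right
      exact hO'.eq_zero_of_norm_pow (Nat.succ_ne_zero n)
    have := Complex.dist_le_mul_div_pow_of_mapsTo_ball_of_isLittleO (n := n) (R₂ := M) hd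
      (fun z hz => by simpa [h0] using hM z hz)
      (by
        simp only [h0, sub_zero]
        refine hO.trans_isLittleO ?_
        simpa only [norm_pow] using (isLittleO_pow_pow (𝕜 := ℂ) (Nat.lt_succ_self n)).norm_right)
      hw
    simpa [h0] using this

/-- If `G (β w + t w ^ q, w) = O(w ^ n)` for each `t`, then this bound is uniform for bounded `t`. -/
lemma exists_uniform_bound {G : ℂ × ℂ → F} (hG : ∀ᶠ p in 𝓝 0, DifferentiableAt ℂ G p)
    {β : ℂ → ℂ} (hβ : ∀ᶠ w in 𝓝 0, DifferentiableAt ℂ β w) (hβ0 : β 0 = 0)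
    {q n : ℕ} (hq : 1 ≤ q)
    (hO : ∀ t : ℂ, (fun w => G (β w + t * w ^ q, w)) =O[𝓝 0] (fun w => w ^ n)) (R : ℝ) :
    ∃ C, 0 ≤ C ∧ ∀ᶠ w in 𝓝 0, ∀ t : ℂ, ‖t‖ ≤ R →
      ‖G (β w + t * w ^ q, w)‖ ≤ C * ‖w‖ ^ n := by
  have hbdd : ∀ᶠ p in 𝓝 0, ‖G p‖ < ‖G 0‖ + 1 :=
    hG.self_of_nhds.continuousAt.norm.eventually_lt continuousAt_const (by simp)
  obtain ⟨r, hr, hball⟩ := Metric.eventually_nhds_iff_ball.mp (hβ.and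
    (eventually_forall_perturbation (hG.and hbdd) hβ.self_of_nhds.continuousAt hβ0 hq R))
  refine ⟨(‖G 0‖ + 1) / r ^ n, by positivity, ?_⟩
  filter_upwards [ball_mem_nhds (0 : ℂ) hr] with w hw t ht
  have hschwarz := norm_le_mul_div_pow_of_isBigO (h := fun z => G (β z + t * z ^ q, z))
    (M := ‖G 0‖ + 1) (fun z hz => DifferentiableAt.differentiableWithinAt ?_)
    (fun z hz => ((hball z hz).2 t ht).2.le) (hO t) hw
  · convert hschwarz using 1
    rw [div_pow]; ring
  · have hβz := (hball z hz).1
    exact DifferentiableAt.comp z ((hball z hz).2 t ht).1 (by fun_prop)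

end

/-- Although `s + a u y ^ k` may vanish for some `u` (when `k = 0`), it stays away from zero on
some large circle. -/
lemma exists_radius_le_norm_add {s : ℂ} (hs : s ≠ 0) (a u₀ : ℂ) (k : ℕ) :
    ∃ ρ δ : ℝ, 0 < ρ ∧ ‖u₀‖ ≤ ρ ∧ 0 < δ ∧
      ∀ᶠ y in 𝓝 (0 : ℂ), ∀ u : ℂ, ‖u‖ = ρ → δ ≤ ‖s + a * u * y ^ k‖ := by
  have hs' : 0 < ‖s‖ := norm_pos_iff.mpr hs
  by_cases h : k = 0 ∧ a ≠ 0
  · obtain ⟨rfl, ha⟩ := h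
    have ha' : 0 < ‖a‖ := norm_pos_iff.mpr ha
    refine ⟨‖u₀‖ + (‖s‖ + 1) / ‖a‖, 1, by positivity, by simp; positivity, one_pos,
      .of_forall fun y u hu => ?_⟩
    have h1 : ‖a * u‖ - ‖s‖ ≤ ‖s + a * u‖ := by
      simpa [add_comm] using norm_sub_norm_le (a * u) (-s)
    have h2 : ‖a * u‖ = ‖a‖ * ‖u₀‖ + (‖s‖ + 1) := by
      rw [norm_mul, hu]; field_simp
    have h3 : 0 ≤ ‖a‖ * ‖u₀‖ := by positivity
    simp only [pow_zero, mul_one]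
    linarith
  · refine ⟨‖u₀‖ + 1, ‖s‖ / 2, by positivity, by simp, by positivity, ?_⟩
    have hsmall : ∀ᶠ y in 𝓝 (0 : ℂ), ‖a‖ * (‖u₀‖ + 1) * ‖y‖ ^ k < ‖s‖ / 2 := by
      refine ContinuousAt.eventually_lt (f := fun y : ℂ => ‖a‖ * (‖u₀‖ + 1) * ‖y‖ ^ k)
        (by fun_prop) continuousAt_const ?_
      by_cases hk : k = 0
      · have ha : a = 0 := by tauto
        simp [ha, hs]
      · simp [hk, hs]
    filter_upwards [hsmall] with y hy u hu
    have h1 : ‖s‖ - ‖a * u * y ^ k‖ ≤ ‖s + a * u * y ^ k‖ := by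
      simpa using norm_sub_norm_le s (-(a * u * y ^ k))
    rw [norm_mul, norm_mul, norm_pow, hu] at h1
    linarith

/-- Growth of order `n` along all curves `(β w + t w ^ q, w)` passes to growth of order `n` along
all curves `(α y + u y ^ q, y)` through a map sending `(α y, y)` to `(β (ψ y), ψ y)`. -/
lemma isBigO_pow_comp_perturbation {F : Type*} [NormedAddCommGroup F] [NormedSpace ℂ F]
    {G : ℂ × ℂ → F} (hG : ∀ᶠ p in 𝓝 0, DifferentiableAt ℂ G p)
    {φ : ℂ × ℂ → ℂ × ℂ} (hφ : AnalyticAt ℂ φ 0) (hφ0 : φ 0 = 0)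
    {α β ψ : ℂ → ℂ} (hα : AnalyticAt ℂ α 0) (hα0 : α 0 = 0)
    (hβ : AnalyticAt ℂ β 0) (hβ0 : β 0 = 0)
    (hψ : DifferentiableAt ℂ ψ 0) (hψ0 : ψ 0 = 0) (hψ' : deriv ψ 0 ≠ 0)
    (hcurve : ∀ᶠ y in 𝓝 0, φ (α y, y) = (β (ψ y), ψ y)) {q n : ℕ} (hq : 1 ≤ q)
    (hO : ∀ t : ℂ, (fun w => G (β w + t * w ^ q, w)) =O[𝓝 0] (fun w => w ^ n)) (u₀ : ℂ) :
    (fun y => G (φ (α y + u₀ * y ^ q, y))) =O[𝓝 0] (fun y => y ^ n) := by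
  set s := deriv ψ 0
  set a := (fderiv ℂ φ 0 (1, 0)).2 with ha
  obtain ⟨ρ, δ, hρ, hu₀, hδ, hlower⟩ := exists_radius_le_norm_add hψ' a u₀ (q - 1)
  set ε := δ / (2 * (1 + ρ)) with hε_def
  have hε : 0 < ε := by positivity
  have near {P : ℂ × ℂ → Prop} (hP : ∀ᶠ p in 𝓝 0, P p) :
      ∀ᶠ y in 𝓝 0, ∀ u : ℂ, ‖u‖ ≤ ρ → P (α y + u * y ^ q, y) :=
    eventually_forall_perturbation hP hα.continuousAt hα0 hq ρ
  have hψ_lin : ∀ᶠ y in 𝓝 0, ‖ψ y - s * y‖ ≤ ε * ‖y‖ := by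
    filter_upwards [hψ.hasDerivAt.isLittleO.bound hε] with y hy
    simpa [hψ0, mul_comm] using hy
  obtain ⟨W, hW, hstrict⟩ : ∃ W ∈ 𝓝 (0 : ℂ × ℂ), ∀ p ∈ W, ∀ p' ∈ W,
      ‖φ p - φ p' - fderiv ℂ φ 0 (p - p')‖ ≤ ε * ‖p - p'‖ := by
    have := hφ.hasStrictFDerivAt.isLittleO.bound hε
    rw [nhds_prod_eq] at this
    exact eventually_prod_self_iff.mp this
  obtain ⟨K, S, hS, hLip⟩ : ∃ K, ∃ S ∈ 𝓝 (0 : ℂ × ℂ),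
      LipschitzOnWith K (fun p => (φ p).1 - β (φ p).2) S := by
    have hd : AnalyticAt ℂ (fun p => (φ p).1 - β (φ p).2) 0 := by
      have h1 : AnalyticAt ℂ (fun p => (φ p).1) 0 := analyticAt_fst.fun_comp hφ
      have h2 : AnalyticAt ℂ (fun p => (φ p).2) 0 := analyticAt_snd.fun_comp hφ
      have h3 : AnalyticAt ℂ (fun p => β (φ p).2) 0 :=
        AnalyticAt.fun_comp (by simpa [hφ0] using hβ) h2
      exact h1.fun_sub h3
    exact hd.hasStrictFDerivAt.exists_lipschitzOnWith
  set R := K * ρ / (δ / 2) ^ q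
  obtain ⟨C, hC, hbound⟩ := exists_uniform_bound hG
    (hβ.eventually_analyticAt.mono fun _ h => h.differentiableAt) hβ0 hq hO R
  have hGφ : ∀ᶠ p in 𝓝 0, DifferentiableAt ℂ (fun p => G (φ p)) p := by
    have htend : Tendsto φ (𝓝 0) (𝓝 0) := by simpa [hφ0] using hφ.continuousAt.tendsto
    filter_upwards [htend.eventually hG, hφ.eventually_analyticAt] with p h1 h2
    exact h1.comp p h2.differentiableAt
  have hbound' : ∀ᶠ p in 𝓝 0, ∀ t : ℂ, ‖t‖ ≤ R →
      ‖G (β (φ p).2 + t * (φ p).2 ^ q, (φ p).2)‖ ≤ C * ‖(φ p).2‖ ^ n := by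
    have htend : Tendsto (fun p => (φ p).2) (𝓝 0) (𝓝 0) := by
      simpa [hφ0] using hφ.continuousAt.snd.tendsto
    exact htend.eventually hbound
  set B := ‖s‖ + ‖a‖ * ρ + δ
  refine IsBigO.of_bound (C * B ^ n) ?_
  filter_upwards [near (P := (· ∈ W)) hW, near (P := (· ∈ S)) hS, near hGφ, near hbound',
    hψ_lin, hcurve, hlower, ball_mem_nhds (0 : ℂ) one_pos] with y hyW hyS hyG hyb hylin hyc hylow hy1
  have hy1 : ‖y‖ ≤ 1 := by simpa using (mem_ball_zero_iff.mp hy1).le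
  have hyq : ‖y‖ ^ q ≤ ‖y‖ := by
    simpa using pow_le_pow_of_le_one (norm_nonneg y) hy1 hq
  have base_mem {T : Set (ℂ × ℂ)} (h : ∀ u : ℂ, ‖u‖ ≤ ρ → (α y + u * y ^ q, y) ∈ T) :
      (α y, y) ∈ T := by simpa using h 0 (by simpa using hρ.le)
  have hcircle : ∀ u ∈ frontier (ball (0 : ℂ) ρ),
      ‖G (φ (α y + u * y ^ q, y))‖ ≤ C * (B * ‖y‖) ^ n := by
    intro u hu
    replace hu : ‖u‖ = ρ := by simpa [frontier_ball (0 : ℂ) hρ.ne'] using hu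
    set p := (α y + u * y ^ q, y)
    have hpsub : p - (α y, y) = (u * y ^ q) • ((1, 0) : ℂ × ℂ) := by simp [p]
    have hpnorm : ‖p - (α y, y)‖ = ρ * ‖y‖ ^ q := by
      rw [hpsub, norm_smul, norm_mul, norm_pow, hu]; simp
    have hdev : ‖(φ p).2 - (s + a * u * y ^ (q - 1)) * y‖ ≤ δ / 2 * ‖y‖ := by
      have h1 := (norm_snd_le _).trans (hstrict p (hyW u hu.le) _ (base_mem hyW))
      rw [hpnorm, hpsub, map_smul, hyc] at h1
      simp only [Prod.snd_sub, Prod.smul_snd, ← ha, smul_eq_mul] at h1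
      have h2 : (φ p).2 - (s + a * u * y ^ (q - 1)) * y
          = ((φ p).2 - ψ y - u * y ^ q * a) + (ψ y - s * y) := by
        conv_rhs => rw [← Nat.sub_add_cancel hq, pow_succ]
        ring
      calc _ ≤ ε * (ρ * ‖y‖ ^ q) + ε * ‖y‖ := by
            rw [h2]; exact (norm_add_le _ _).trans (add_le_add h1 hylin)
        _ ≤ ε * (ρ * ‖y‖) + ε * ‖y‖ := by gcongr
        _ = δ / 2 * ‖y‖ := by rw [hε_def]; field_simp; ring
    have hmain : δ * ‖y‖ ≤ ‖(s + a * u * y ^ (q - 1)) * y‖ := by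
      rw [norm_mul]; gcongr; exact hylow u hu
    have hge : δ / 2 * ‖y‖ ≤ ‖(φ p).2‖ := by
      have := norm_sub_norm_le ((s + a * u * y ^ (q - 1)) * y) (φ p).2
      rw [norm_sub_rev] at this
      linarith
    have hle : ‖(φ p).2‖ ≤ B * ‖y‖ := by
      have h1 := norm_sub_norm_le (φ p).2 ((s + a * u * y ^ (q - 1)) * y)
      have h2 : ‖(s + a * u * y ^ (q - 1)) * y‖ ≤ (‖s‖ + ‖a‖ * ρ) * ‖y‖ := by
        rw [norm_mul]
        gcongr
        refine (norm_add_le _ _).trans ?_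
        rw [norm_mul, norm_mul, norm_pow, hu]
        exact add_le_add le_rfl
          (mul_le_of_le_one_right (by positivity) (pow_le_one₀ (norm_nonneg y) hy1))
      have h3 : B * ‖y‖ = (‖s‖ + ‖a‖ * ρ) * ‖y‖ + δ * ‖y‖ := by ring
      have h4 : 0 ≤ δ * ‖y‖ := by positivity
      linarith
    have hD : ‖(φ p).1 - β (φ p).2‖ ≤ R * ‖(φ p).2‖ ^ q := by
      have h1 := hLip.norm_sub_le (hyS u hu.le) (base_mem hyS)
      rw [hpnorm] at h1
      simp only [hyc, sub_self, sub_zero] at h1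
      calc _ ≤ K * (ρ * ‖y‖ ^ q) := h1
        _ = R * (δ / 2 * ‖y‖) ^ q := by
            rw [mul_pow, ← mul_assoc R, div_mul_cancel₀ _ (by positivity), mul_assoc]
        _ ≤ _ := by gcongr
    obtain ⟨t, ht, hDt⟩ : ∃ t : ℂ, ‖t‖ ≤ R ∧ (φ p).1 - β (φ p).2 = t * (φ p).2 ^ q := by
      by_cases h0 : (φ p).2 ^ q = 0
      · refine ⟨0, by simp only [norm_zero]; positivity, ?_⟩
        rw [← norm_pow, h0] at hD
        simpa using hD
      · refine ⟨((φ p).1 - β (φ p).2) / (φ p).2 ^ q, ?_, (div_mul_cancel₀ _ h0).symm⟩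
        rwa [norm_div, div_le_iff₀ (norm_pos_iff.mpr h0), norm_pow]
    have hφp : φ p = (β (φ p).2 + t * (φ p).2 ^ q, (φ p).2) := by
      rw [← hDt]; simp
    calc ‖G (φ p)‖ ≤ C * ‖(φ p).2‖ ^ n := by
          have := hyb u hu.le t ht
          rwa [← hφp] at this
      _ ≤ _ := by gcongr
  have hdiff : DiffContOnCl ℂ (fun u => G (φ (α y + u * y ^ q, y))) (ball 0 ρ) := by
    refine DifferentiableOn.diffContOnCl fun u hu => ?_
    rw [closure_ball _ hρ.ne', mem_closedBall_zero_iff] at hu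
    exact (DifferentiableAt.comp (f := fun u => (α y + u * y ^ q, y)) u (hyG u hu)
      (by fun_prop)).differentiableWithinAt
  have := Complex.norm_le_of_forall_mem_frontier_norm_le isBounded_ball hdiff hcircle
    (z := u₀) (by rwa [closure_ball _ hρ.ne', mem_closedBall_zero_iff])
  rwa [mul_pow, ← mul_assoc, ← norm_pow] at this

lemma gradOrdPert_le_of_eventuallyEq_comp {f g : ℂ × ℂ → ℂ} {φ : ℂ × ℂ → ℂ × ℂ}
    (hφ : AnalyticAt ℂ φ 0) (hφ0 : φ 0 = 0) (hg : AnalyticAt ℂ g 0) (hf : f =ᶠ[𝓝 0] g ∘ φ)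
    {α β ψ : ℂ → ℂ} (hα : AnalyticAt ℂ α 0) (hα0 : α 0 = 0)
    (hβ : AnalyticAt ℂ β 0) (hβ0 : β 0 = 0)
    (hψ : DifferentiableAt ℂ ψ 0) (hψ0 : ψ 0 = 0) (hψ' : deriv ψ 0 ≠ 0)
    (hcurve : ∀ᶠ y in 𝓝 0, φ (α y, y) = (β (ψ y), ψ y)) {q : ℕ} (hq : 1 ≤ q) :
    gradOrdPert g β q ≤ gradOrdPert f α q := by
  have hf_an : AnalyticAt ℂ f 0 :=
    (AnalyticAt.comp (by rwa [hφ0]) hφ).congr hf.symm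
  refine ENat.forall_natCast_le_iff_le.mp fun n hn => ?_
  rw [natCast_le_gradOrdPert_iff_isBigO hg hβ hβ0 hq] at hn
  rw [natCast_le_gradOrdPert_iff_isBigO hf_an hα hα0 hq]
  intro u
  refine IsBigO.trans ?_ (isBigO_pow_comp_perturbation
    (hg.fderiv.eventually_analyticAt.mono fun _ h => h.differentiableAt)
    hφ hφ0 hα hα0 hβ hβ0 hψ hψ0 hψ' hcurve hq hn u)
  have htend : Tendsto φ (𝓝 0) (𝓝 0) := by simpa [hφ0] using hφ.continuousAt.tendsto
  have hbound : ∀ᶠ p in 𝓝 0, ‖fderiv ℂ f p‖ ≤ (‖fderiv ℂ φ 0‖ + 1) * ‖fderiv ℂ g (φ p)‖ := by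
    filter_upwards [hf.eventually_nhds, htend.eventually hg.eventually_analyticAt,
      hφ.eventually_analyticAt, hφ.fderiv.continuousAt.norm.eventually_lt
        (continuousAt_const (y := ‖fderiv ℂ φ 0‖ + 1)) (by simp)] with p h1 h2 h3 h4
    rw [Filter.EventuallyEq.fderiv_eq h1, fderiv_comp p h2.differentiableAt h3.differentiableAt,
      mul_comm]
    exact (ContinuousLinearMap.opNorm_comp_le _ _).trans (by gcongr)
  refine IsBigO.of_bound (‖fderiv ℂ φ 0‖ + 1) ?_
  filter_upwards [eventually_forall_perturbation hbound hα.continuousAt hα0 hq ‖u‖] with y hy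
  exact hy u le_rfl

end

/-- With `φ = (φ₁,φ₂) : U → V` a biholomorphism fixing `0`, `g` analytic
on `V`, `f := g ∘ φ`, `α` an arc analytic near `0` with `α(0)=0`, `ψ(y) := φ₂(α(y),y)` of
vanishing order exactly `1`, and `β(w) := φ₁(α(ψ⁻¹(w)), ψ⁻¹(w))` (so
`φ(α(y),y) = (β(ψ(y)), ψ(y))` near `0`), the generic gradient orders satisfy
`Λ_f(q) = Λ_g(q)` for every natural number `q ≥ 1`. -/
theorem generic_gradient_order_analytic_invariant
    (U V : Set (ℂ × ℂ)) (hUopen : IsOpen U) (hVopen : IsOpen V)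
    (h0U : ((0 : ℂ), (0 : ℂ)) ∈ U) (h0V : ((0 : ℂ), (0 : ℂ)) ∈ V)
    (φ φinv : ℂ × ℂ → ℂ × ℂ)
    (hφ : ∀ p ∈ U, AnalyticAt ℂ φ p) (hφinv : ∀ p ∈ V, AnalyticAt ℂ φinv p)
    (hφUV : Set.MapsTo φ U V) (hφinvVU : Set.MapsTo φinv V U)
    (hleft : ∀ p ∈ U, φinv (φ p) = p) (hright : ∀ p ∈ V, φ (φinv p) = p)
    (hφ0 : φ (0, 0) = (0, 0))
    (g : ℂ × ℂ → ℂ) (hg : ∀ p ∈ V, AnalyticAt ℂ g p)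
    (f : ℂ × ℂ → ℂ) (hf : f = g ∘ φ)
    (α : ℂ → ℂ) (hα : AnalyticAt ℂ α 0) (hα0 : α 0 = 0)
    (ψ : ℂ → ℂ) (hψ : ψ = fun y => (φ (α y, y)).2)
    (hψord : ord₀ ψ = 1)
    (ψinv : ℂ → ℂ) (hψinv : AnalyticAt ℂ ψinv 0) (hψinv0 : ψinv 0 = 0)
    (hψleft : ∀ᶠ y in nhds (0 : ℂ), ψinv (ψ y) = y)
    (hψright : ∀ᶠ w in nhds (0 : ℂ), ψ (ψinv w) = w)
    (β : ℂ → ℂ) (hβ : β = fun w => (φ (α (ψinv w), ψinv w)).1) :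
    ∀ q : ℕ, 1 ≤ q → gradOrdPert f α q = gradOrdPert g β q := by
  intro q hq
  have hφU0 := hφ _ h0U
  have hφV0 := hφinv _ h0V
  have hφinv0 : φinv (0, 0) = (0, 0) := by simpa [hφ0] using hleft _ h0U
  have hψ0 : ψ 0 = 0 := by simp [hψ, hα0, hφ0]
  have hcurve : AnalyticAt ℂ (fun y => φ (α y, y)) 0 :=
    AnalyticAt.fun_comp (by simpa [hα0] using hφU0) (by fun_prop)
  have hψ_an : AnalyticAt ℂ ψ 0 := by rw [hψ]; exact analyticAt_snd.fun_comp hcurve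
  have hβ_an : AnalyticAt ℂ β 0 := by
    rw [hβ]
    have : AnalyticAt ℂ (fun w => φ (α (ψinv w), ψinv w)) 0 :=
      AnalyticAt.fun_comp (g := fun y => φ (α y, y)) (by rwa [hψinv0]) hψinv
    exact analyticAt_fst.fun_comp this
  have hβ0 : β 0 = 0 := by simp [hβ, hψinv0, hα0, hφ0]
  have hderiv : deriv ψinv 0 * deriv ψ 0 = 1 := by
    have h := HasDerivAt.comp (h₂ := ψinv) 0
      (by rw [hψ0]; exact hψinv.differentiableAt.hasDerivAt) hψ_an.differentiableAt.hasDerivAt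
    exact (h.congr_of_eventuallyEq (hψleft.mono fun y hy => hy.symm)).unique (hasDerivAt_id 0)
  have hg_eq : g =ᶠ[nhds 0] f ∘ φinv := by
    filter_upwards [hVopen.mem_nhds h0V] with p hp
    simp [hf, hright p hp]
  have hα_of_β : ∀ᶠ w in nhds (0 : ℂ), φinv (β w, w) = (α (ψinv w), ψinv w) := by
    have htend : Tendsto (fun w => (α (ψinv w), ψinv w)) (nhds 0) (nhds (0, 0)) := by
      have h : ContinuousAt (fun w => α (ψinv w)) 0 :=
        ContinuousAt.comp (g := α) (by rw [hψinv0]; exact hα.continuousAt) hψinv.continuousAt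
      simpa [hψinv0, hα0] using (h.prodMk hψinv.continuousAt).tendsto
    filter_upwards [hψright, htend.eventually (hUopen.mem_nhds h0U)] with w h1 h2
    rw [← hleft _ h2]
    congr 1
    refine Prod.ext (by simp [hβ]) ?_
    rw [hψ] at h1
    exact h1.symm
  apply le_antisymm
  · refine gradOrdPert_le_of_eventuallyEq_comp hφV0 hφinv0 ?_ hg_eq hβ_an hβ0 hα hα0
      hψinv.differentiableAt hψinv0 (left_ne_zero_of_mul_eq_one hderiv) hα_of_β hq
    rw [hf]
    exact AnalyticAt.comp (by rw [← Prod.mk_zero_zero, hφ0]; exact hg _ h0V) hφU0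
  · refine gradOrdPert_le_of_eventuallyEq_comp hφU0 hφ0 (hg _ h0V) (by rw [hf]) hα hα0 hβ_an hβ0
      hψ_an.differentiableAt hψ0 (right_ne_zero_of_mul_eq_one hderiv) ?_ hq
    filter_upwards [hψleft] with y hy
    refine Prod.ext ?_ (by simp [hψ])
    simp only [hβ, hy]
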